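/- The toric code associated to the Hirzebruch polytope with vertices (0,0),(d,0),(d,e+rd),(0,e), under d < q−1, e < q−1, e+rd < q−1, has length (q−1)², dimension (d+1)(e+1)+r·d(d+1)/2, and minimum distance exactly min{(q−1−d)(q−1−e), (q−1)(q−1−e−rd)}. -/

import Mathlib

open MvPolynomial

/-- Evaluation of a two-variable polynomial at all points of the torus `(Fˣ)²`. -/
noncomputable def torusEval (F : Type*) [Field F] :
    MvPolynomial (Fin 2) F →ₗ[F] (Fˣ × Fˣ → F) :=
  LinearMap.pi fun t : Fˣ × Fˣ =>
    (MvPolynomial.aeval fun i : Fin 2 => if i = 0 then (t.1 : F) else (t.2 : F)).toLinearMap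

/-- The lattice points of the Hirzebruch polytope with vertices
`(0,0), (d,0), (d,e+rd), (0,e)`. -/
def hirzU (d e r : ℕ) : Set (ℕ × ℕ) :=
  {u : ℕ × ℕ | ((u.1 : ℝ), (u.2 : ℝ)) ∈
    convexHull ℝ {((0 : ℝ), (0 : ℝ)), ((d : ℝ), 0), ((d : ℝ), (e : ℝ) + r * d),
      (0, (e : ℝ))}}

/-- The toric code associated to the lattice points `U`. -/
noncomputable def toricCode (F : Type*) [Field F] (U : Set (ℕ × ℕ)) :
    Submodule F (Fˣ × Fˣ → F) :=
  Submodule.map (torusEval F)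
    (Submodule.span F {m : MvPolynomial (Fin 2) F | ∃ u ∈ U, m = X 0 ^ u.1 * X 1 ^ u.2})

lemma P1 {F : Type*} [Field F] (n : ℕ) (a : ℕ → F) (T : Finset Fˣ) (hT : n ≤ T.card)
    (h : ∀ x ∈ T, ∑ i ∈ Finset.range n, a i * (x : F) ^ i = 0) : ∀ i < n, a i = 0 := by
  classical
  set p : Polynomial F := ∑ i ∈ Finset.range n, Polynomial.C (a i) * Polynomial.X ^ i with hp
  have hc : ∀ i, p.coeff i = if i < n then a i else 0 := by
    intro i
    simp [hp, Polynomial.finsetSum_coeff, Polynomial.coeff_C_mul, Polynomial.coeff_X_pow]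
  intro i hi
  have hp0 : p = 0 := by
    by_contra hne
    refine hne (Polynomial.eq_zero_of_natDegree_lt_card_of_eval_eq_zero' p (T.image Units.val) ?_ ?_)
    · intro x hx
      obtain ⟨u, hu, rfl⟩ := Finset.mem_image.1 hx
      simpa [hp, Polynomial.eval_finsetSum] using h u hu
    · rw [Finset.card_image_of_injective _ Units.val_injective]
      refine lt_of_lt_of_le ?_ hT
      by_contra hlt
      have := hc p.natDegree
      rw [if_neg hlt] at this
      exact hne (Polynomial.leadingCoeff_eq_zero.1 this)
  have := hc i
  simpa [hp0, hi] using this.symm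

lemma P2 {F : Type*} [Field F] [Fintype F] [DecidableEq F] (n : ℕ) (a : ℕ → F)
    (h : ∃ i ≤ n, a i ≠ 0) :
    Fintype.card F - 1 - n ≤ (Finset.univ.filter
      fun x : Fˣ => ∑ i ∈ Finset.range (n+1), a i * (x : F) ^ i ≠ 0).card := by
  have h1 := Finset.card_filter_add_card_filter_not (s := (Finset.univ : Finset Fˣ))
    (fun x : Fˣ => ∑ i ∈ Finset.range (n+1), a i * (x : F) ^ i = 0)
  rw [Finset.card_univ, Fintype.card_units] at h1
  have h2 : (Finset.univ.filter
      fun x : Fˣ => ∑ i ∈ Finset.range (n+1), a i * (x : F) ^ i = 0).card < n + 1 := by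
    by_contra hlt
    obtain ⟨i, hi, hne⟩ := h
    exact hne (P1 (n+1) a _ (not_lt.1 hlt) (by simp) i (by omega))
  simp only [ne_eq]
  omega

def hirzS (d e r : ℕ) : Finset (ℕ × ℕ) :=
  (Finset.range (d+1) ×ˢ Finset.range (e + r * d + 1)).filter fun u => u.2 ≤ e + r * u.1

lemma card_hirzS (d e r : ℕ) : (hirzS d e r).card = (d + 1) * (e + 1) + r * (d * (d + 1)) / 2 := by
  have h1 : (hirzS d e r).card = ∑ i ∈ Finset.range (d+1), (e + r * i + 1) := by
    rw [hirzS, Finset.card_filter, Finset.sum_product]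
    refine Finset.sum_congr rfl fun i hi => ?_
    rw [← Finset.card_filter]
    have : (Finset.range (e + r * d + 1)).filter (fun j => j ≤ e + r * i) = Finset.range (e + r * i + 1) := by
      ext j
      have : r * i ≤ r * d := Nat.mul_le_mul_left _ (by simp at hi; omega)
      simp; omega
    rw [this, Finset.card_range]
  rw [h1]
  have h2 : ∀ d : ℕ, 2 * ∑ i ∈ Finset.range (d+1), (e + r * i + 1) = 2 * ((d + 1) * (e + 1)) + r * (d * (d + 1)) := by
    intro d
    induction d with
    | zero => simp
    | succ k ih => rw [Finset.sum_range_succ, mul_add, ih]; ring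
  have := h2 d
  omega

lemma hirzU_eq (d e r : ℕ) (hd : 0 < d) (he : 0 < e) : hirzU d e r = ↑(hirzS d e r) := by
  have hd' : (0:ℝ) < d := by exact_mod_cast hd
  have he' : (0:ℝ) < e := by exact_mod_cast he
  ext ⟨i, j⟩
  have hS : (i, j) ∈ hirzS d e r ↔ i ≤ d ∧ j ≤ e + r * i := by
    simp only [hirzS, Finset.mem_filter, Finset.mem_product, Finset.mem_range]
    constructor
    · rintro ⟨⟨h1, h2⟩, h3⟩; exact ⟨by omega, h3⟩
    · rintro ⟨h1, h2⟩
      have : r * i ≤ r * d := Nat.mul_le_mul_left _ h1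
      omega
  rw [Finset.mem_coe, hS]
  simp only [hirzU, Set.mem_ofPred_eq]
  set V : Set (ℝ × ℝ) := {((0 : ℝ), (0 : ℝ)), ((d : ℝ), 0), ((d : ℝ), (e : ℝ) + r * d),
      (0, (e : ℝ))} with hV
  constructor
  · intro h
    have hc : Convex ℝ {p : ℝ × ℝ | p.1 ≤ d ∧ p.2 ≤ e + r * p.1} := by
      intro p hp q hq a b ha hb hab
      simp only [Set.mem_ofPred_eq, Prod.fst_add, Prod.snd_add, Prod.smul_fst, Prod.smul_snd, smul_eq_mul] at *
      have hb' : b = 1 - a := by linarith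
      subst hb'
      constructor <;> nlinarith [mul_le_mul_of_nonneg_left hp.1 ha, mul_le_mul_of_nonneg_left hq.1 hb, mul_le_mul_of_nonneg_left hp.2 ha, mul_le_mul_of_nonneg_left hq.2 hb]
    have hsub : V ⊆ {p : ℝ × ℝ | p.1 ≤ d ∧ p.2 ≤ e + r * p.1} := by
      rintro p (rfl | rfl | rfl | rfl) <;> simp <;> positivity
    have := convexHull_min hsub hc h
    simp only [Set.mem_ofPred_eq] at this
    exact ⟨by exact_mod_cast this.1, by exact_mod_cast this.2⟩
  · rintro ⟨h1, h2⟩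
    have h1' : (i:ℝ) ≤ d := by exact_mod_cast h1
    have h2' : (j:ℝ) ≤ e + r * i := by exact_mod_cast h2
    have hc := convex_convexHull ℝ V
    have hi0 : (0:ℝ) ≤ i := by positivity
    have hA : ((i:ℝ), (0:ℝ)) ∈ convexHull ℝ V := by
      have := hc (subset_convexHull ℝ V (by simp [hV] : ((0:ℝ),(0:ℝ)) ∈ V))
        (subset_convexHull ℝ V (by simp [hV] : ((d:ℝ),(0:ℝ)) ∈ V))
        (a := 1 - i / d) (b := i / d) (by rw [sub_nonneg, div_le_one hd']; exact h1') (by positivity) (by ring)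
      convert this using 1
      ext <;> simp; field_simp
    have hB : ((i:ℝ), (e + r * i:ℝ)) ∈ convexHull ℝ V := by
      have := hc (subset_convexHull ℝ V (by simp [hV] : ((0:ℝ),(e:ℝ)) ∈ V))
        (subset_convexHull ℝ V (by simp [hV] : ((d:ℝ),(e + r * d:ℝ)) ∈ V))
        (a := 1 - i / d) (b := i / d) (by rw [sub_nonneg, div_le_one hd']; exact h1') (by positivity) (by ring)
      convert this using 1
      ext <;> simp <;> field_simp
      ring
    have hp : (0:ℝ) < e + r * i := by positivity
    have := hc hA hB (a := 1 - j / (e + r * i)) (b := j / (e + r * i))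
      (by rw [sub_nonneg, div_le_one hp]; exact h2') (by positivity) (by ring)
    convert this using 1
    ext <;> simp <;> field_simp
    ring

def hmono (F : Type*) [Field F] (u : ℕ × ℕ) : Fˣ × Fˣ → F :=
  fun t => (t.1 : F) ^ u.1 * (t.2 : F) ^ u.2

def rword {F : Type*} [Field F] (d n : ℕ) (C : ℕ → ℕ → F) : Fˣ × Fˣ → F :=
  fun t => ∑ j ∈ Finset.range (n + 1),
    (∑ i ∈ Finset.range (d + 1), C i j * (t.1 : F) ^ i) * (t.2 : F) ^ j

lemma toricCode_eq (F : Type*) [Field F] (U : Set (ℕ × ℕ)) :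
    toricCode F U = Submodule.span F (hmono F '' U) := by
  rw [toricCode, Submodule.map_span]
  congr 1
  have h : ∀ u : ℕ × ℕ, torusEval F (X 0 ^ u.1 * X 1 ^ u.2) = hmono F u := by
    intro u
    ext t
    simp [torusEval, hmono]
  ext f
  constructor
  · rintro ⟨_, ⟨u, hu, rfl⟩, rfl⟩
    exact ⟨u, hu, (h u).symm⟩
  · rintro ⟨u, hu, rfl⟩
    exact ⟨_, ⟨u, hu, rfl⟩, h u⟩

lemma sum_eq_rword {F : Type*} [Field F] (d e r : ℕ) (c : ℕ × ℕ → F) :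
    ∑ u ∈ hirzS d e r, c u • hmono F u =
      rword d (e + r * d) fun i j => if j ≤ e + r * i then c (i, j) else 0 := by
  ext t
  rw [hirzS, Finset.sum_filter, Finset.sum_product, Finset.sum_comm, Finset.sum_apply]
  simp only [rword, Finset.sum_apply, Finset.sum_mul]
  refine Finset.sum_congr rfl fun j _ => Finset.sum_congr rfl fun i _ => ?_
  split_ifs <;> simp [hmono, mul_assoc]

lemma arith (N d e r l : ℕ) (hl : l ≤ d) (hdN : d < N) (h : e + r * d < N) :
    min ((N - d) * (N - e)) (N * (N - e - r * d)) ≤ (N - l) * (N - (e + r * (d - l))) := by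
  obtain ⟨k, rfl⟩ := Nat.exists_eq_add_of_le hl
  obtain ⟨M, rfl⟩ := Nat.exists_eq_add_of_lt h
  simp only [Nat.add_sub_cancel_left]
  have e1 : e + r * (l + k) + M + 1 - e = r * (l + k) + M + 1 := by omega
  have e2 : e + r * (l + k) + M + 1 - e - r * (l + k) = M + 1 := by omega
  have e3 : e + r * (l + k) + M + 1 - (e + r * k) = r * l + M + 1 := by
    rw [mul_add]; omega
  rw [e2, e1, e3]
  set N := e + r * (l + k) + M + 1 with hN
  obtain ⟨P, hP⟩ := Nat.exists_eq_add_of_lt hdN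
  have f1 : N - (l + k) = P + 1 := by omega
  have f2 : N - l = P + k + 1 := by omega
  rw [f1, f2]
  -- N = l + k + P + 1
  rw [hP]
  by_cases hc : M + 1 ≤ r * (P + 1)
  · -- increasing branch
    refine (min_le_right _ _).trans ?_
    have : l * (M + 1) ≤ l * (r * (P + 1)) := Nat.mul_le_mul_left _ hc
    nlinarith [Nat.zero_le (r * l * k)]
  · refine (min_le_left _ _).trans ?_
    have : k * (r * (P + 1)) ≤ k * (M + 1) := Nat.mul_le_mul_left _ (by omega)
    nlinarith [Nat.zero_le (r * l * k)]

lemma hamming_fib {F : Type*} [Field F] [Fintype F] [DecidableEq F] (w : Fˣ × Fˣ → F) :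
    hammingNorm w = ∑ x : Fˣ, (Finset.univ.filter fun y : Fˣ => w (x, y) ≠ 0).card := by
  rw [hammingNorm, Finset.card_filter, ← Finset.univ_product_univ, Finset.sum_product]
  simp only [Finset.card_filter]

lemma low {F : Type*} [Field F] [Fintype F] [DecidableEq F] (d e r : ℕ)
    (hdq : d < Fintype.card F - 1) (herd : e + r * d < Fintype.card F - 1)
    (C : ℕ → ℕ → F) (hC : ∀ i j, e + r * i < j → C i j = 0)
    (hne : ∃ i ≤ d, ∃ j ≤ e + r * d, C i j ≠ 0) :
    min ((Fintype.card F - 1 - d) * (Fintype.card F - 1 - e))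
        ((Fintype.card F - 1) * (Fintype.card F - 1 - e - r * d)) ≤
      hammingNorm (rword d (e + r * d) C) := by
  set N := Fintype.card F - 1 with hN
  set B : Finset Fˣ := Finset.univ.filter fun x => ∀ j ≤ e + r * d,
    ∑ i ∈ Finset.range (d + 1), C i j * (x : F) ^ i = 0 with hB
  have hBm : ∀ x ∈ B, ∀ j ≤ e + r * d,
    ∑ i ∈ Finset.range (d + 1), C i j * (x : F) ^ i = 0 := by
    intro x hx; simpa [hB] using hx
  have hl : B.card ≤ d := by
    by_contra hlt
    obtain ⟨i, hi, j, hj, h⟩ := hne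
    exact h (P1 (d + 1) (fun i => C i j) B (by omega) (fun x hx => hBm x hx j hj) i (by omega))
  refine (arith N d e r B.card hl hdq herd).trans ?_
  set l := B.card with hlB
  have hz : ∀ i ≤ d, ∀ j, e + r * (d - l) < j → j ≤ e + r * d → C i j = 0 := by
    intro i hi j hj hj2
    have hsmall : ∀ i, i ≤ d - l → C i j = 0 := fun i hi =>
      hC i j (lt_of_le_of_lt (by have := Nat.mul_le_mul_left r hi; omega) hj)
    by_cases hil : i ≤ d - l
    · exact hsmall i hil
    · have := P1 l (fun k => C (d - l + 1 + k) j) B le_rfl (by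
        intro x hx
        have h := hBm x hx j hj2
        rw [show d + 1 = (d - l + 1) + l by omega, Finset.sum_range_add,
          Finset.sum_eq_zero (fun i hi => by
            rw [hsmall i (by simp at hi; omega), zero_mul]), zero_add] at h
        have h' : (x : F) ^ (d - l + 1) * ∑ k ∈ Finset.range l, C (d - l + 1 + k) j * (x : F) ^ k = 0 := by
          rw [← h, Finset.mul_sum]
          exact Finset.sum_congr rfl fun k _ => by rw [pow_add]; ring
        exact (mul_eq_zero.1 h').resolve_left (pow_ne_zero _ x.ne_zero)) (i - (d - l + 1)) (by omega)
      simpa [show d - l + 1 + (i - (d - l + 1)) = i by omega] using this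
  have hnl : e + r * (d - l) ≤ e + r * d := by
    have := Nat.mul_le_mul_left r (Nat.sub_le d l); omega
  have hword : ∀ x y : Fˣ, rword d (e + r * d) C (x, y) =
      ∑ j ∈ Finset.range (e + r * (d - l) + 1),
        (∑ i ∈ Finset.range (d + 1), C i j * (x : F) ^ i) * (y : F) ^ j := by
    intro x y
    rw [rword]
    symm
    refine Finset.sum_subset (Finset.range_mono (by omega)) fun j hj hj' => ?_
    simp only [Finset.mem_range] at hj hj'
    rw [Finset.sum_eq_zero (fun i hi => ?_), zero_mul]
    rw [hz i (by simp at hi; omega) j (by omega) (by omega), zero_mul]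
  rw [hamming_fib]
  have hcB : Bᶜ.card = N - l := by
    rw [Finset.card_compl, Fintype.card_units]
  calc (N - l) * (N - (e + r * (d - l))) = ∑ x ∈ Bᶜ, (N - (e + r * (d - l))) := by
        rw [Finset.sum_const, hcB, smul_eq_mul]
    _ ≤ ∑ x ∈ Bᶜ, (Finset.univ.filter fun y : Fˣ => rword d (e + r * d) C (x, y) ≠ 0).card := by
        refine Finset.sum_le_sum fun x hx => ?_
        simp only [hword]
        refine P2 (e + r * (d - l)) (fun j => ∑ i ∈ Finset.range (d + 1), C i j * (x : F) ^ i) ?_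
        have hx' : ¬ ∀ j ≤ e + r * d, ∑ i ∈ Finset.range (d + 1), C i j * (x : F) ^ i = 0 := by
          simpa [hB] using hx
        push Not at hx'
        obtain ⟨j, hj, hj'⟩ := hx'
        refine ⟨j, ?_, hj'⟩
        by_contra hlt
        refine hj' (Finset.sum_eq_zero fun i hi => ?_)
        rw [hz i (by simp at hi; omega) j (by omega) hj, zero_mul]
    _ ≤ _ := Finset.sum_le_sum_of_subset (Finset.subset_univ _)

lemma rword_ne {F : Type*} [Field F] [Fintype F] [DecidableEq F] (d e r : ℕ)
    (hdq : d < Fintype.card F - 1) (herd : e + r * d < Fintype.card F - 1)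
    (C : ℕ → ℕ → F) (hC : ∀ i j, e + r * i < j → C i j = 0)
    (h0 : rword d (e + r * d) C = 0) : ∀ i ≤ d, ∀ j ≤ e + r * d, C i j = 0 := by
  by_contra hne
  push Not at hne
  have := low d e r hdq herd C hC hne
  rw [h0, hammingNorm_zero] at this
  have h1 : 0 < (Fintype.card F - 1 - d) * (Fintype.card F - 1 - e) :=
    Nat.mul_pos (by omega) (by omega)
  have h2 : 0 < (Fintype.card F - 1) * (Fintype.card F - 1 - e - r * d) :=
    Nat.mul_pos (by omega) (by omega)
  have := lt_min h1 h2
  omega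

lemma hli {F : Type*} [Field F] [Fintype F] [DecidableEq F] (d e r : ℕ)
    (hdq : d < Fintype.card F - 1) (herd : e + r * d < Fintype.card F - 1) :
    LinearIndependent F (fun u : hirzS d e r => hmono F u) := by
  rw [Fintype.linearIndependent_iff]
  intro g hg
  set c : ℕ × ℕ → F := fun u => if h : u ∈ hirzS d e r then g ⟨u, h⟩ else 0 with hc
  have h1 : ∑ u ∈ hirzS d e r, c u • hmono F u = 0 := by
    rw [← hg, ← Finset.sum_coe_sort]
    exact Finset.sum_congr rfl fun u _ => by simp [hc]
  rw [sum_eq_rword] at h1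
  have h2 := rword_ne d e r hdq herd _ (fun i j hij => if_neg (by omega)) h1
  rintro ⟨⟨i, j⟩, hu⟩
  have hu' := hu
  simp only [hirzS, Finset.mem_filter, Finset.mem_product, Finset.mem_range] at hu'
  have := h2 i (by omega) j (by omega)
  rw [if_pos hu'.2] at this
  simpa [hc, hu] using this

/-- product words -/
lemma prodword {F : Type*} [Field F] [Fintype F] [DecidableEq F] (d e r k a b : ℕ)
    (hb : b ≤ e + r * k) (hak : k + a ≤ d) (A B : Finset Fˣ) (hA : A.card = a) (hB : B.card = b) :
    ∃ c ∈ Submodule.span F (hmono F '' (hirzS d e r : Set (ℕ × ℕ))),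
      hammingNorm c = (Fintype.card F - 1 - a) * (Fintype.card F - 1 - b) := by
  set p : Polynomial F := ∏ s ∈ A, (Polynomial.X - Polynomial.C (s : F)) with hp
  set q : Polynomial F := ∏ s ∈ B, (Polynomial.X - Polynomial.C (s : F)) with hq
  have hpd : p.natDegree < a + 1 := by
    rw [hp, Polynomial.natDegree_prod_of_monic _ _ (fun s _ => Polynomial.monic_X_sub_C _)]
    simp [hA]
  have hqd : q.natDegree < b + 1 := by
    rw [hq, Polynomial.natDegree_prod_of_monic _ _ (fun s _ => Polynomial.monic_X_sub_C _)]
    simp [hB]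
  have hpe : ∀ x : Fˣ, p.eval (x : F) ≠ 0 ↔ x ∈ Aᶜ := by
    intro x
    simp [hp, Polynomial.eval_prod, Finset.prod_eq_zero_iff, sub_eq_zero, Units.val_inj]
  have hqe : ∀ x : Fˣ, q.eval (x : F) ≠ 0 ↔ x ∈ Bᶜ := by
    intro x
    simp [hq, Polynomial.eval_prod, Finset.prod_eq_zero_iff, sub_eq_zero, Units.val_inj]
  refine ⟨fun t => (t.1 : F) ^ k * p.eval (t.1 : F) * q.eval (t.2 : F), ?_, ?_⟩
  · have : (fun t : Fˣ × Fˣ => (t.1 : F) ^ k * p.eval (t.1 : F) * q.eval (t.2 : F)) =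
        ∑ i ∈ Finset.range (a + 1), ∑ j ∈ Finset.range (b + 1),
          (p.coeff i * q.coeff j) • hmono F (k + i, j) := by
      ext t
      rw [Polynomial.eval_eq_sum_range' hpd, Polynomial.eval_eq_sum_range' hqd, mul_assoc,
        Finset.sum_mul_sum, Finset.mul_sum]
      simp only [Finset.sum_apply, Pi.smul_apply, smul_eq_mul, hmono, pow_add, Finset.mul_sum]
      exact Finset.sum_congr rfl fun i _ => Finset.sum_congr rfl fun j _ => by ring
    rw [this]
    refine Submodule.sum_mem _ fun i hi => Submodule.sum_mem _ fun j hj =>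
      Submodule.smul_mem _ _ (Submodule.subset_span ⟨_, ?_, rfl⟩)
    simp only [Finset.mem_range] at hi hj
    simp only [hirzS, Finset.mem_coe, Finset.mem_filter, Finset.mem_product, Finset.mem_range]
    have h1 := Nat.mul_le_mul_left r (show k ≤ k + i by omega)
    have h2 := Nat.mul_le_mul_left r (show k ≤ d by omega)
    omega
  · rw [hammingNorm]
    have : (Finset.univ.filter fun t : Fˣ × Fˣ =>
        (t.1 : F) ^ k * p.eval (t.1 : F) * q.eval (t.2 : F) ≠ 0) = Aᶜ ×ˢ Bᶜ := by
      ext t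
      rw [Finset.mem_product, ← hpe, ← hqe]
      simp
    rw [this, Finset.card_product, Finset.card_compl, Finset.card_compl, hA, hB,
      Fintype.card_units]

/-- The Hirzebruch toric code has length `(q−1)²`, dimension
`(d+1)(e+1)+r·d(d+1)/2` and minimum distance exactly
`min{(q−1−d)(q−1−e), (q−1)(q−1−e−rd)}`. -/
theorem hirzebruch_code_parameters (F : Type*) [Field F] [Fintype F] [DecidableEq F]
    (d e r : ℕ) (hd : 0 < d) (he : 0 < e) (hr : 0 < r)
    (hdq : d < Fintype.card F - 1) (heq : e < Fintype.card F - 1)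
    (herd : e + r * d < Fintype.card F - 1) :
    Fintype.card (Fˣ × Fˣ) = (Fintype.card F - 1) ^ 2 ∧
    Module.finrank F (toricCode F (hirzU d e r)) =
      (d + 1) * (e + 1) + r * (d * (d + 1)) / 2 ∧
    IsLeast {w : ℕ | ∃ c ∈ toricCode F (hirzU d e r), c ≠ 0 ∧ hammingNorm c = w}
      (min ((Fintype.card F - 1 - d) * (Fintype.card F - 1 - e))
        ((Fintype.card F - 1) * (Fintype.card F - 1 - e - r * d))) := by
  have hN : Fintype.card Fˣ = Fintype.card F - 1 := Fintype.card_units F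
  have hset : hmono F '' (hirzS d e r : Set (ℕ × ℕ)) =
      Set.range (fun u : hirzS d e r => hmono F u) := by
    rw [Set.image_eq_range]; rfl
  rw [toricCode_eq, hirzU_eq d e r hd he]
  refine ⟨?_, ?_, ?_, ?_⟩
  · rw [Fintype.card_prod, hN, sq]
  · rw [hset, finrank_span_eq_card (hli d e r hdq herd), Fintype.card_coe, card_hirzS]
  · have hex : ∀ n, n < Fintype.card F - 1 → ∃ A : Finset Fˣ, A.card = n := by
      intro n hn
      obtain ⟨A, -, hA⟩ := Finset.exists_subset_card_eq (s := (Finset.univ : Finset Fˣ)) (n := n)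
        (by rw [Finset.card_univ, hN]; omega)
      exact ⟨A, hA⟩
    have hpos1 : 0 < (Fintype.card F - 1 - d) * (Fintype.card F - 1 - e) :=
      Nat.mul_pos (by omega) (by omega)
    have hpos2 : 0 < (Fintype.card F - 1) * (Fintype.card F - 1 - e - r * d) :=
      Nat.mul_pos (by omega) (by omega)
    have hne : ∀ c : Fˣ × Fˣ → F, 0 < hammingNorm c → c ≠ 0 := fun c h =>
      hammingNorm_pos_iff.1 h
    rcases min_choice ((Fintype.card F - 1 - d) * (Fintype.card F - 1 - e))
        ((Fintype.card F - 1) * (Fintype.card F - 1 - e - r * d)) with h | h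
    · rw [h]
      obtain ⟨A, hA⟩ := hex d hdq
      obtain ⟨B, hB⟩ := hex e heq
      obtain ⟨c, hc, hw⟩ := prodword d e r 0 d e (by omega) (by omega) A B hA hB
      exact ⟨c, hc, hne c (by rw [hw]; exact hpos1), hw⟩
    · rw [h]
      obtain ⟨B, hB⟩ := hex (e + r * d) herd
      obtain ⟨c, hc, hw⟩ := prodword d e r d 0 (e + r * d) le_rfl (by omega) ∅ B rfl hB
      rw [Nat.sub_zero, ← Nat.sub_sub] at hw
      exact ⟨c, hc, hne c (by rw [hw]; exact hpos2), hw⟩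
  · rintro w ⟨c, hc, hc0, rfl⟩
    rw [Submodule.mem_span_image_finset_iff_exists_fun] at hc
    obtain ⟨g, rfl⟩ := hc
    set c : ℕ × ℕ → F := fun u => if h : u ∈ hirzS d e r then g ⟨u, h⟩ else 0 with hcdef
    have h1 : ∑ u, g u • hmono F (u : ℕ × ℕ) = ∑ u ∈ hirzS d e r, c u • hmono F u := by
      rw [← Finset.sum_coe_sort (hirzS d e r)]
      exact Finset.sum_congr rfl fun u _ => by simp [hcdef]
    rw [h1, sum_eq_rword] at hc0 ⊢
    refine low d e r hdq herd _ (fun i j hij => if_neg (by omega)) ?_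
    by_contra hcon
    push Not at hcon
    apply hc0
    ext t
    rw [rword]
    refine Finset.sum_eq_zero fun j hj => ?_
    rw [Finset.sum_eq_zero (fun i hi => ?_), zero_mul]
    simp only [Finset.mem_range] at hi hj
    rw [hcon i (by omega) j (by omega), zero_mul]
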